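/- Let A ↪ B be an integral ring extension. An element b ∈ B lies in the weak subintegral closure of A in B (i.e., A[b] is a subring with Spec(A[b]) → Spec(A) a universal homeomorphism) if and only if b ⊗ 1 = 1 ⊗ b in the reduction (B ⊗_A B)_red. -/

import Mathlib

open AlgebraicGeometry CategoryTheory TensorProduct

universe u

/-- A morphism of schemes is a universal homeomorphism if every base change is a
homeomorphism on underlying spaces. -/
def UniversalHomeomorphism : MorphismProperty Scheme.{u} :=
  MorphismProperty.universally
    (AlgebraicGeometry.topologically fun {α β} _ _ f => IsHomeomorph f)

/-- Maps from a ring to an algebraically closed field extend along integral extensions. -/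
theorem exists_extension_of_isIntegral {C B K : Type*} [CommRing C] [CommRing B] [Field K]
    [IsAlgClosed K] [Algebra C B] [Algebra.IsIntegral C B]
    (hinj : Function.Injective (algebraMap C B)) (g : C →+* K) :
    ∃ h : B →+* K, h.comp (algebraMap C B) = g := by
  have : FaithfulSMul C B := (faithfulSMul_iff_algebraMap_injective C B).mpr hinj
  have hp : (RingHom.ker g).IsPrime := RingHom.ker_isPrime g
  obtain ⟨q, hq⟩ := Algebra.IsIntegral.comap_surjective C B ⟨RingHom.ker g, hp⟩
  have hq' : q.asIdeal.comap (algebraMap C B) = RingHom.ker g :=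
    congrArg PrimeSpectrum.asIdeal hq
  have : q.asIdeal.LiesOver (RingHom.ker g) := ⟨hq'.symm⟩
  let gb : C ⧸ RingHom.ker g →+* K := RingHom.kerLift g
  have hgb : Function.Injective gb := RingHom.kerLift_injective g
  let : Algebra (C ⧸ RingHom.ker g) K := gb.toAlgebra
  have : FaithfulSMul (C ⧸ RingHom.ker g) K :=
    (faithfulSMul_iff_algebraMap_injective _ _).mpr hgb
  have : Module.IsTorsionFree (C ⧸ RingHom.ker g) K := inferInstance
  have : Algebra.IsIntegral (C ⧸ RingHom.ker g) (B ⧸ q.asIdeal) := inferInstance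
  have hfs : FaithfulSMul (C ⧸ RingHom.ker g) (B ⧸ q.asIdeal) := inferInstance
  have : Module.IsTorsionFree (C ⧸ RingHom.ker g) (B ⧸ q.asIdeal) :=
    FaithfulSMul.to_isTorsionFree _ _
  let l : (B ⧸ q.asIdeal) →ₐ[C ⧸ RingHom.ker g] K := IsAlgClosed.lift
  refine ⟨l.toRingHom.comp (Ideal.Quotient.mk q.asIdeal), ?_⟩
  ext c
  have := l.commutes (Ideal.Quotient.mk _ c)
  exact this

/-- For integral extensions, universal homeomorphism is universal injectivity. -/
theorem universalHomeomorphism_iff {X Y : Scheme.{u}} (f : X ⟶ Y) [IsIntegralHom f]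
    [Surjective f] : UniversalHomeomorphism f ↔ UniversallyInjective f := by
  rw [universallyInjective_iff]
  constructor
  · intro h X' Y' i₁ i₂ f' H
    exact (h i₁ i₂ f' H).injective
  · intro h X' Y' i₁ i₂ f' H
    have h1 : Surjective f' := MorphismProperty.of_isPullback (P := @Surjective) H.flip ‹_›
    have h2 : IsIntegralHom f' := MorphismProperty.of_isPullback (P := @IsIntegralHom) H.flip ‹_›
    exact isHomeomorph_iff_continuous_isClosedMap_bijective.mpr
      ⟨f'.continuous, f'.isClosedMap, h i₁ i₂ f' H, f'.surjective⟩

/-- Let `A ↪ B` be an integral ring extension.  An element `b : B` lies in the weak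
subintegral closure of `A` in `B` (i.e. `Spec (A[b]) → Spec A` is a universal
homeomorphism) iff `b ⊗ 1 = 1 ⊗ b` in `(B ⊗_A B)_red`. -/
theorem stmt18 {A B : Type u} [CommRing A] [CommRing B] [Algebra A B]
    (hinj : Function.Injective (algebraMap A B)) [Algebra.IsIntegral A B] (b : B) :
    UniversalHomeomorphism
        (Spec.map (CommRingCat.ofHom (algebraMap A (Algebra.adjoin A {b})))) ↔
      Ideal.Quotient.mk (nilradical (B ⊗[A] B)) (b ⊗ₜ[A] 1) =
        Ideal.Quotient.mk (nilradical (B ⊗[A] B)) (1 ⊗ₜ[A] b) := by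
  have hint : Algebra.IsIntegral A (Algebra.adjoin A {b}) :=
    Algebra.IsIntegral.of_injective (Algebra.adjoin A {b}).val Subtype.val_injective
  have hint2 : Algebra.IsIntegral (Algebra.adjoin A {b}) B := Algebra.IsIntegral.tower_top A
  have hinj2 : Function.Injective (algebraMap A (Algebra.adjoin A {b})) := by
    intro x y h
    exact hinj (congrArg Subtype.val h)
  have : FaithfulSMul A (Algebra.adjoin A {b}) :=
    (faithfulSMul_iff_algebraMap_injective _ _).mpr hinj2
  have : IsIntegralHom (Spec.map (CommRingCat.ofHom (algebraMap A (Algebra.adjoin A {b})))) :=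
    IsIntegralHom.SpecMap_iff.mpr (algebraMap_isIntegral_iff.mpr hint)
  have : Surjective (Spec.map (CommRingCat.ofHom (algebraMap A (Algebra.adjoin A {b})))) :=
    ⟨Algebra.IsIntegral.comap_surjective A (Algebra.adjoin A {b})⟩
  have T := (tfae_universallyInjective
    (Spec.map (CommRingCat.ofHom (algebraMap A (Algebra.adjoin A {b}))))).out 0 1 rfl rfl
  rw [universalHomeomorphism_iff, T]
  clear T
  have hb : b ∈ Algebra.adjoin A {b} := Algebra.self_mem_adjoin_singleton A b
  constructor
  · intro h
    rw [Ideal.Quotient.eq, nilradical_eq_sInf, Ideal.mem_sInf]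
    intro P hP
    have hP : P.IsPrime := hP
    let π : B ⊗[A] B →ₐ[A] P.ResidueField := IsScalarTower.toAlgHom A (B ⊗[A] B) P.ResidueField
    let g₁ : Algebra.adjoin A {b} →ₐ[A] P.ResidueField :=
      (π.comp Algebra.TensorProduct.includeLeft).comp (Algebra.adjoin A {b}).val
    let g₂ : Algebra.adjoin A {b} →ₐ[A] P.ResidueField :=
      (π.comp Algebra.TensorProduct.includeRight).comp (Algebra.adjoin A {b}).val
    have key := @h P.ResidueField _ (Spec.map (CommRingCat.ofHom g₁.toRingHom))
      (Spec.map (CommRingCat.ofHom g₂.toRingHom)) (by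
        dsimp only
        rw [← Spec.map_comp, ← Spec.map_comp, ← CommRingCat.ofHom_comp, ← CommRingCat.ofHom_comp]
        congr 2
        exact g₁.comp_algebraMap.trans g₂.comp_algebraMap.symm)
    have key2 := congrArg CommRingCat.Hom.hom (Spec.map_injective key)
    have key3 : π (b ⊗ₜ 1) = π (1 ⊗ₜ b) := RingHom.congr_fun key2 ⟨b, hb⟩
    rw [← Ideal.algebraMap_residueField_eq_zero, map_sub, sub_eq_zero]
    exact key3
  · intro h K _ x₁ x₂ hx
    rw [Ideal.Quotient.eq, mem_nilradical] at h
    obtain ⟨g₁, rfl⟩ := Spec.map_surjective x₁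
    obtain ⟨g₂, rfl⟩ := Spec.map_surjective x₂
    dsimp only at hx
    rw [← Spec.map_comp, ← Spec.map_comp] at hx
    have hg := congrArg CommRingCat.Hom.hom (Spec.map_injective hx)
    congr 1
    let ι := algebraMap K (AlgebraicClosure K)
    obtain ⟨h₁, e₁⟩ := exists_extension_of_isIntegral (C := Algebra.adjoin A {b}) (B := B)
      Subtype.val_injective (ι.comp g₁.hom)
    obtain ⟨h₂, e₂⟩ := exists_extension_of_isIntegral (C := Algebra.adjoin A {b}) (B := B)
      Subtype.val_injective (ι.comp g₂.hom)
    have hA (a : A) : g₁.hom (algebraMap A _ a) = g₂.hom (algebraMap A _ a) :=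
      RingHom.congr_fun hg a
    let : Algebra A (AlgebraicClosure K) := (h₁.comp (algebraMap A B)).toAlgebra
    let k₁ : B →ₐ[A] AlgebraicClosure K := { h₁ with commutes' := fun a => rfl }
    let k₂ : B →ₐ[A] AlgebraicClosure K := { h₂ with
      commutes' := fun a => by
        have t₁ := RingHom.congr_fun e₁ (algebraMap A _ a)
        have t₂ := RingHom.congr_fun e₂ (algebraMap A _ a)
        exact t₂.trans ((congrArg ι (hA a)).symm.trans t₁.symm) }
    have hn := (h.map (Algebra.TensorProduct.lift k₁ k₂ (fun _ _ => .all _ _))).eq_zero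
    have hn2 : h₁ b = h₂ b := by
      have hn3 : k₁ b = k₂ b := by simpa [sub_eq_zero] using hn
      exact hn3
    have hbb : g₁.hom ⟨b, hb⟩ = g₂.hom ⟨b, hb⟩ := by
      apply ι.injective
      have t₁ := RingHom.congr_fun e₁ ⟨b, hb⟩
      have t₂ := RingHom.congr_fun e₂ ⟨b, hb⟩
      exact t₁.symm.trans (hn2.trans t₂)
    ext ⟨c, hc⟩
    induction hc using Algebra.adjoin_induction with
    | mem x hx' =>
      obtain rfl : x = b := hx'
      exact hbb
    | algebraMap r => exact hA r
    | add x y hx hy ihx ihy =>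
      have := congrArg₂ (· + ·) ihx ihy
      simp only [← map_add] at this
      exact this
    | mul x y hx hy ihx ihy =>
      have := congrArg₂ (· * ·) ihx ihy
      simp only [← map_mul] at this
      exact this
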